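/- arXiv:2404.19603 — 3 statements merged into one kernel-verified Lean document; each statement's English description precedes it below -/
import Mathlib

section
/- Let A be a commutative ring, M a finite projective A-module, N an A-module, and (N_i)_{i ∈ I} an arbitrary (possibly infinite) family of A-submodules of N. For any submodule N' ⊆ N the induced map M ⊗_A N' → M ⊗_A N is injective, so M ⊗_A N' may be identified with its image in M ⊗_A N. With this identification, M ⊗_A (⋂_{i ∈ I} N_i) = ⋂_{i ∈ I} (M ⊗_A N_i) as submodules of M ⊗_A N. -/
/-!
A linear form `φ` on `M` induces a slice map `φ ⊗ id : M ⊗ N → N`. When `M` is projective, a dual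
basis writes every `x : M ⊗ N` as a finite sum of tensors `m ⊗ (φ ⊗ id) x`, so `x` lies in
`M ⊗ N'` if and only if all its slices lie in `N'`. Hence `M ⊗ N'` is an intersection of preimages
of `N'`, and intersections commute with preimages and with each other.
-/

open scoped TensorProduct

section Slice

variable {A M N P : Type*} [CommSemiring A] [AddCommMonoid M] [Module A M]
  [AddCommMonoid N] [Module A N] [AddCommMonoid P] [Module A P]

/-- The slice map `φ ⊗ id : M ⊗ N → A ⊗ N ≃ N` of a linear form `φ` on `M`, which extracts the
`φ`-coordinate in `N` of a tensor. -/
noncomputable def leftSlice (φ : Module.Dual A M) : M ⊗[A] N →ₗ[A] N :=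
  (TensorProduct.lid A N).toLinearMap ∘ₗ φ.rTensor N

@[simp]
theorem leftSlice_tmul (φ : Module.Dual A M) (m : M) (n : N) :
    leftSlice φ (m ⊗ₜ[A] n) = φ m • n := by
  simp [leftSlice]

theorem leftSlice_comp_lTensor (φ : Module.Dual A M) (f : P →ₗ[A] N) :
    leftSlice φ ∘ₗ f.lTensor M = f ∘ₗ leftSlice φ :=
  TensorProduct.ext' fun m p => by simp

theorem rTensor_linearCombination_apply {κ : Type*} [DecidableEq κ] (v : κ → M)
    (y : (κ →₀ A) ⊗[A] N) :
    (Finsupp.linearCombination A v).rTensor N y =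
      (TensorProduct.finsuppScalarLeft A N κ y).sum fun k n => v k ⊗ₜ[A] n := by
  suffices (Finsupp.linearCombination A v).rTensor N =
      Finsupp.lsum A (fun k => TensorProduct.mk A M N (v k)) ∘ₗ
        (TensorProduct.finsuppScalarLeft A N κ).toLinearMap from LinearMap.congr_fun this y
  ext k n
  simp [TensorProduct.finsuppScalarLeft_apply_tmul]

theorem exists_eq_sum_tmul_leftSlice [Module.Projective A M] (x : M ⊗[A] N) :
    ∃ (t : Finset M) (φ : M → Module.Dual A M), x = ∑ m ∈ t, m ⊗ₜ[A] leftSlice (φ m) x := by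
  classical
  obtain ⟨s, hs⟩ := Module.projective_def'.mp ‹Module.Projective A M›
  let c : M →₀ N := TensorProduct.finsuppScalarLeft A N M (s.rTensor N x)
  have c_apply (m : M) : c m = leftSlice (Finsupp.lapply m ∘ₗ s) x := by
    simp [c, TensorProduct.finsuppScalarLeft_apply, leftSlice, LinearMap.rTensor_comp_apply]
  refine ⟨c.support, fun m => Finsupp.lapply m ∘ₗ s, ?_⟩
  calc x = (Finsupp.linearCombination A id ∘ₗ s).rTensor N x := by
        rw [hs, LinearMap.rTensor_id_apply]
    _ = c.sum fun m n => m ⊗ₜ[A] n := by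
        rw [LinearMap.rTensor_comp_apply, rTensor_linearCombination_apply]; rfl
    _ = ∑ m ∈ c.support, m ⊗ₜ[A] leftSlice (Finsupp.lapply m ∘ₗ s) x := by
        simp only [Finsupp.sum, c_apply]

theorem range_lTensor_eq_iInf_comap_leftSlice [Module.Projective A M] (f : P →ₗ[A] N) :
    LinearMap.range (f.lTensor M) =
      ⨅ φ : Module.Dual A M, (LinearMap.range f).comap (leftSlice φ) := by
  refine le_antisymm (le_iInf fun φ => ?_) fun x hx => ?_
  · rw [← Submodule.map_le_iff_le_comap, ← LinearMap.range_comp, leftSlice_comp_lTensor]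
    exact LinearMap.range_comp_le_range _ _
  · obtain ⟨t, φ, hsum⟩ := exists_eq_sum_tmul_leftSlice x
    rw [hsum]
    refine Submodule.sum_mem _ fun m _ => ?_
    obtain ⟨p, hp⟩ := (Submodule.mem_iInf _).mp hx (φ m)
    exact ⟨m ⊗ₜ p, by rw [LinearMap.lTensor_tmul, hp]⟩

theorem range_lTensor_subtype_iInf [Module.Projective A M] {ι : Sort*} (Ns : ι → Submodule A N) :
    LinearMap.range (LinearMap.lTensor M (⨅ i, Ns i).subtype) =
      ⨅ i, LinearMap.range (LinearMap.lTensor M (Ns i).subtype) := by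
  simp only [range_lTensor_eq_iInf_comap_leftSlice, Submodule.range_subtype, Submodule.comap_iInf]
  exact iInf_comm

theorem finite_projective_tensor_intersection_of_family_general [Module.Projective A M]
    {ι : Sort*} (Ns : ι → Submodule A N) :
    (∀ N' : Submodule A N, Function.Injective (LinearMap.lTensor M N'.subtype)) ∧
    LinearMap.range (LinearMap.lTensor M (⨅ i, Ns i).subtype) =
      ⨅ i, LinearMap.range (LinearMap.lTensor M (Ns i).subtype) :=
  ⟨fun N' => Module.Flat.lTensor_preserves_injective_linearMap _ N'.injective_subtype,
    range_lTensor_subtype_iInf Ns⟩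

end Slice

/-!
Let A be a commutative ring, M a finite projective A-module, N an A-module, and
(N_i)_{i ∈ I} an arbitrary family of A-submodules of N.  For any submodule
N' ⊆ N the induced map M ⊗ N' → M ⊗ N is injective, and, identifying M ⊗ N'
with its image in M ⊗ N, one has M ⊗ (⋂ᵢ N_i) = ⋂ᵢ (M ⊗ N_i) inside M ⊗ N.
-/

theorem finite_projective_tensor_intersection_of_family
    {A M N : Type*} {ι : Type*} [CommRing A]
    [AddCommGroup M] [Module A M] [Module.Finite A M] [Module.Projective A M]
    [AddCommGroup N] [Module A N] (Ns : ι → Submodule A N) :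
    (∀ N' : Submodule A N,
      Function.Injective (LinearMap.lTensor M N'.subtype)) ∧
    LinearMap.range (LinearMap.lTensor M (⨅ i, Ns i).subtype) =
      ⨅ i, LinearMap.range (LinearMap.lTensor M (Ns i).subtype) :=
  finite_projective_tensor_intersection_of_family_general Ns
end

section
/- Let p be a prime number and let A → B be a homomorphism of commutative rings which are both classically p-adically complete, with A p-torsion-free. Let M be a finitely generated, classically p-adically complete A-module such that M[1/p] := M ⊗_A A[1/p] is a finite projective A[1/p]-module. Then the natural map M[1/p] ⊗_A B → (M ⊗̂_A B)[1/p] is bijective, where M ⊗̂_A B denotes the p-adic completion lim_n (M ⊗_A B)/p^n(M ⊗_A B). In particular, (M ⊗̂_A B)[1/p] is a finite projective B[1/p]-module. -/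
open TensorProduct

/-!
Let p be a prime and A → B a homomorphism of commutative rings, both
classically p-adically complete, with A p-torsion-free.  Let M be a finitely
generated, classically p-adically complete A-module with M[1/p] finite
projective over A[1/p].  Then the natural map
M[1/p] ⊗_A B → (M ⊗̂_A B)[1/p] is bijective (where M ⊗̂_A B is the p-adic
completion lim_n (M ⊗_A B)/pⁿ(M ⊗_A B)); in particular (M ⊗̂_A B)[1/p] is a
finite projective B[1/p]-module.

Here M[1/p] is `LocalizedModule (powers p) M` (a module over
A[1/p] = `Localization (powers p)`), the completed base change M ⊗̂_A B is
realized as `AdicCompletion (span {p}) (B ⊗[A] M)`, and the natural map is the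
unique additive map Φ with Φ((m/1) ⊗ b) = (the class of b ⊗ m in the
completion)/1.
-/

/-!
Clearing denominators in a splitting of `S⁻¹Aⁿ → S⁻¹M` exhibits `M` as a retract of `Aⁿ` up to
multiplication by some `s ∈ S`, and additive functors preserve this. Comparing `B ⊗ M` and its
completion with the complete module `Bⁿ` shows that the kernel and cokernel of
`B ⊗ M → (B ⊗ M)^` are killed by `s`, so the completion disappears after inverting `S`.
-/

section Retract

variable {R : Type*} [CommRing R] {N P N' : Type*} [AddCommGroup N] [Module R N]
  [AddCommGroup P] [Module R P] [AddCommGroup N'] [Module R N']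

theorem exists_lift_of_isLocalizedModule_of_smul_ker_eq_zero {M : Type*} [AddCommGroup M]
    [Module R M] [Module.Finite R M] (S : Submonoid R) (f : N →ₗ[R] N') [IsLocalizedModule S f]
    (t : S) (ht : ∀ x, f x = 0 → t • x = 0) (g : M →ₗ[R] N') :
    ∃ (h : M →ₗ[R] N) (s : S), f ∘ₗ h = s • g := by
  obtain ⟨n, π, hπ⟩ := Module.Finite.exists_fin' R M
  obtain ⟨h, s, hs⟩ :=
    Module.FinitePresentation.exists_lift_of_isLocalizedModule S f (g ∘ₗ π)
  have ker_le : LinearMap.ker π ≤ LinearMap.ker (t • h) := fun x hx ↦ by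
    refine ht _ ?_
    rw [← LinearMap.comp_apply, hs, LinearMap.smul_apply, LinearMap.comp_apply,
      LinearMap.mem_ker.mp hx, map_zero, smul_zero]
  refine ⟨(LinearMap.ker π).liftQ (t • h) ker_le ∘ₗ
    (π.quotKerEquivOfSurjective hπ).symm.toLinearMap, t * s, ?_⟩
  rw [← LinearMap.cancel_right hπ]
  ext x
  simpa [mul_smul] using congrArg (t • ·) (LinearMap.congr_fun hs (Pi.single x 1))

/-- `N` is a retract of `P` up to multiplication by `s`: some composite `N → P → N` is
multiplication by `s`. For `s = 1` this says that `N` is a direct summand of `P`. -/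
def IsRetractUpTo (s : R) (N P : Type*) [AddCommGroup N] [Module R N] [AddCommGroup P]
    [Module R P] : Prop :=
  ∃ (π : P →ₗ[R] N) (σ : N →ₗ[R] P), π ∘ₗ σ = s • LinearMap.id

theorem exists_isRetractUpTo_of_projective_localizedModule (S : Submonoid R)
    (t : S) (ht : ∀ s ∈ S, ∀ a : R, s * a = 0 → t * a = 0) [Module.Finite R N]
    [Module.Projective (Localization S) (LocalizedModule S N)] :
    ∃ (n : ℕ) (s : S), IsRetractUpTo (s : R) N (Fin n → R) := by
  obtain ⟨n, π, hπ⟩ := Module.Finite.exists_fin' R N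
  obtain ⟨splitting, h_splitting⟩ := Module.projective_lifting_property
    (LocalizedModule.map S π) LinearMap.id (LocalizedModule.map_surjective S π hπ)
  let toLocN := LocalizedModule.mkLinearMap S N
  let toLocPi := LocalizedModule.mkLinearMap S (Fin n → R)
  have smul_ker_eq_zero (x : Fin n → R) (hx : toLocPi x = 0) : t • x = 0 := by
    obtain ⟨s, hs⟩ := (IsLocalizedModule.eq_zero_iff S toLocPi).mp hx
    exact funext fun i ↦ ht s s.2 (x i) (congrFun hs i)
  obtain ⟨σ, s, hσ⟩ := exists_lift_of_isLocalizedModule_of_smul_ker_eq_zero S toLocPi t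
    smul_ker_eq_zero (splitting.restrictScalars R ∘ₗ toLocN)
  have localized_eq : toLocN ∘ₗ (π ∘ₗ σ) = toLocN ∘ₗ (s • LinearMap.id) := by
    ext x
    calc toLocN (π (σ x))
        = LocalizedModule.map S π (toLocPi (σ x)) := by simp [toLocN, toLocPi]
      _ = LocalizedModule.map S π (s • splitting (toLocN x)) :=
          congrArg _ (LinearMap.congr_fun hσ x)
      _ = s • LocalizedModule.map S π (splitting (toLocN x)) :=
          ((LocalizedModule.map S π).restrictScalars R).map_smul_of_tower s _
      _ = s • toLocN x := congrArg (s • ·) (LinearMap.congr_fun h_splitting (toLocN x))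
      _ = toLocN (s • x) := (toLocN.map_smul_of_tower s x).symm
  obtain ⟨u, hu⟩ :=
    Module.Finite.exists_smul_of_comp_eq_of_isLocalizedModule S toLocN _ _ localized_eq
  refine ⟨n, u * s, π, u • σ, ?_⟩
  rw [LinearMap.comp_smul, hu, smul_smul]
  rfl

namespace IsRetractUpTo

theorem baseChange {s : R} (h : IsRetractUpTo s N P) (B : Type*) [CommRing B] [Algebra R B] :
    IsRetractUpTo (algebraMap R B s) (B ⊗[R] N) (B ⊗[R] P) := by
  obtain ⟨π, σ, hπσ⟩ := h
  refine ⟨π.baseChange B, σ.baseChange B, ?_⟩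
  rw [← LinearMap.baseChange_comp, hπσ, LinearMap.baseChange_smul, LinearMap.baseChange_id,
    algebraMap_smul]

theorem projective_of_isLocalizedModule [Module.Projective R P] (S : Submonoid R) {s : S}
    (h : IsRetractUpTo (s : R) N P) (f : N →ₗ[R] N') [IsLocalizedModule S f]
    (Rₛ : Type*) [CommRing Rₛ] [Algebra R Rₛ] [IsLocalization S Rₛ] [Module Rₛ N']
    [IsScalarTower R Rₛ N'] : Module.Projective Rₛ N' := by
  obtain ⟨π, σ, hπσ⟩ := h
  let toLocP := TensorProduct.mk R Rₛ P 1
  let σₛ := IsLocalizedModule.mapExtendScalars S f toLocP Rₛ σ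
  let πₛ := IsLocalizedModule.mapExtendScalars S toLocP f Rₛ π
  obtain ⟨u, hu⟩ := IsLocalization.map_units Rₛ s
  have comp_eq : πₛ ∘ₗ σₛ = (u : Rₛ) • LinearMap.id := by
    apply LinearMap.restrictScalars_injective R
    apply IsLocalizedModule.linearMap_ext S f f
    ext x
    have : π (σ x) = (s : R) • x := LinearMap.congr_fun hπσ x
    simp [πₛ, σₛ, this, hu]
  refine Module.Projective.of_split (((u⁻¹ : Rₛˣ) : Rₛ) • σₛ) πₛ ?_
  rw [LinearMap.comp_smul, comp_eq, smul_smul, Units.inv_mul, one_smul]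

variable (I : Ideal R) {s : R}

theorem smul_eq_zero_of_adicCompletion_of_eq_zero [IsHausdorff I P] (h : IsRetractUpTo s N P)
    {x : N} (hx : AdicCompletion.of I N x = 0) : s • x = 0 := by
  obtain ⟨π, σ, hπσ⟩ := h
  have hσx : σ x = 0 := AdicCompletion.of_injective I P <| by
    rw [← AdicCompletion.map_of, hx, map_zero, map_zero]
  calc s • x = π (σ x) := (LinearMap.congr_fun hπσ x).symm
    _ = 0 := by rw [hσx, map_zero]

theorem exists_adicCompletion_of_eq_smul [IsPrecomplete I P] (h : IsRetractUpTo s N P)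
    (y : AdicCompletion I N) : ∃ x, AdicCompletion.of I N x = s • y := by
  obtain ⟨π, σ, hπσ⟩ := h
  obtain ⟨v, hv⟩ := AdicCompletion.of_surjective I P (AdicCompletion.map I σ y)
  refine ⟨π v, ?_⟩
  calc AdicCompletion.of I N (π v)
      = AdicCompletion.map I π (AdicCompletion.map I σ y) := by rw [← hv, AdicCompletion.map_of]
    _ = AdicCompletion.map I (s • LinearMap.id) y := by rw [AdicCompletion.map_comp_apply, hπσ]
    _ = s • y := by
      induction y using AdicCompletion.induction_on with
      | _ a => rw [AdicCompletion.map_mk]; rfl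

end IsRetractUpTo

end Retract

theorem isAdicComplete_of_finite_of_free {R : Type*} [CommRing R] (I : Ideal R)
    [IsAdicComplete I R] (P : Type*) [AddCommGroup P] [Module R P] [Module.Finite R P]
    [Module.Free R P] : IsAdicComplete I P := by
  classical
  let e := (Module.Free.chooseBasis R P).equivFun
  let ι := Module.Free.ChooseBasisIndex R P
  let coords : AdicCompletion I P ≃ (ι → AdicCompletion I R) :=
    (AdicCompletion.congr I e).toEquiv.trans
      (AdicCompletion.piEquivOfFintype I (fun _ : ι ↦ R)).toEquiv
  have coords_comp_of : coords ∘ AdicCompletion.of I P =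
      Pi.map (fun _ : ι ↦ AdicCompletion.of I R) ∘ e := by
    ext x i : 2
    simp only [coords, Equiv.coe_trans, LinearEquiv.coe_toEquiv, Function.comp_apply,
      AdicCompletion.congr_apply, AdicCompletion.piEquivOfFintype_apply, Pi.map_apply]
    rfl
  rw [← AdicCompletion.of_bijective_iff, ← coords.comp_bijective, coords_comp_of]
  exact (Function.Bijective.piMap fun _ ↦ AdicCompletion.of_bijective I R).comp e.bijective

theorem isLocalizedModule_comp_of_smul {R N Y Y' : Type*} [CommRing R] [AddCommGroup N]
    [Module R N] [AddCommGroup Y] [Module R Y] [AddCommGroup Y'] [Module R Y'] (S : Submonoid R)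
    (g : Y →ₗ[R] Y') [IsLocalizedModule S g] (h : N →ₗ[R] Y) (s : S)
    (ker_h : ∀ x, h x = 0 → s • x = 0) (coker_h : ∀ y, ∃ x, h x = s • y) :
    IsLocalizedModule S (g ∘ₗ h) where
  map_units := IsLocalizedModule.map_units g
  surj y' := by
    obtain ⟨⟨y, t⟩, hy : t • y' = g y⟩ := IsLocalizedModule.surj S g y'
    obtain ⟨x, hx⟩ := coker_h y
    refine ⟨(x, s * t), ?_⟩
    rw [LinearMap.comp_apply, hx, g.map_smul_of_tower, ← hy, mul_smul]
  exists_of_eq {x₁ x₂} hx := by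
    obtain ⟨t, ht⟩ := IsLocalizedModule.exists_of_eq (S := S) (f := g) hx
    refine ⟨s * t, ?_⟩
    rw [← sub_eq_zero, mul_smul, mul_smul, ← smul_sub]
    refine ker_h _ ?_
    rw [map_sub, h.map_smul_of_tower, h.map_smul_of_tower, ht, sub_self]

theorem IsRetractUpTo.isLocalizedModule_comp_adicCompletion_of {R N P Y' : Type*} [CommRing R]
    [AddCommGroup N] [Module R N] [AddCommGroup P] [Module R P] [AddCommGroup Y'] [Module R Y']
    (S : Submonoid R) {s : S} (h : IsRetractUpTo (s : R) N P) (I : Ideal R) [IsAdicComplete I P]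
    (g : AdicCompletion I N →ₗ[R] Y') [IsLocalizedModule S g] :
    IsLocalizedModule S (g ∘ₗ AdicCompletion.of I N) :=
  isLocalizedModule_comp_of_smul S g _ s
    (fun _ ↦ h.smul_eq_zero_of_adicCompletion_of_eq_zero I) (h.exists_adicCompletion_of_eq_smul I)

theorem bijective_of_isLocalizedModule_algebraMapSubmonoid {A B N X Y : Type*} [CommRing A]
    [CommRing B] [Algebra A B] [AddCommGroup N] [Module A N] [Module B N] [IsScalarTower A B N]
    [AddCommGroup X] [Module A X] [AddCommGroup Y] [Module B Y] (S : Submonoid A)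
    (ι : N →ₗ[A] X) [IsLocalizedModule S ι]
    (j : N →ₗ[B] Y) [IsLocalizedModule (Algebra.algebraMapSubmonoid B S) j]
    (Φ : X →+ Y) (hΦ : ∀ z, Φ (ι z) = j z)
    (hΦS : ∀ s ∈ S, ∀ x : X, Φ (s • x) = algebraMap A B s • Φ x) : Function.Bijective Φ := by
  have smul_bijective (s : A) (hs : s ∈ S) : Function.Bijective fun x : X ↦ s • x :=
    (Module.End.isUnit_iff _).mp (IsLocalizedModule.map_units ι (⟨s, hs⟩ : S))
  constructor
  · rw [injective_iff_map_eq_zero]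
    intro x hx
    obtain ⟨⟨z, s, hs⟩, hz : s • x = ι z⟩ := IsLocalizedModule.surj S ι x
    have hjz : j z = 0 := by rw [← hΦ, ← hz, hΦS s hs, hx, smul_zero]
    obtain ⟨⟨_, t, ht, rfl⟩, htz⟩ :=
      (IsLocalizedModule.eq_zero_iff (Algebra.algebraMapSubmonoid B S) j).mp hjz
    have hιz : ι z = 0 := (IsLocalizedModule.eq_zero_iff S ι).mpr
      ⟨⟨t, ht⟩, (algebraMap_smul B t z).symm.trans htz⟩
    exact (smul_bijective s hs).1 (by simp only [hz, hιz, smul_zero])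
  · intro y
    obtain ⟨⟨z, ⟨_, s, hs, rfl⟩⟩, hz : algebraMap A B s • y = j z⟩ :=
      IsLocalizedModule.surj (Algebra.algebraMapSubmonoid B S) j y
    obtain ⟨x, hx : s • x = ι z⟩ := (smul_bijective s hs).2 (ι z)
    refine ⟨x, IsLocalizedModule.smul_injective j
      (⟨algebraMap A B s, s, hs, rfl⟩ : Algebra.algebraMapSubmonoid B S) ?_⟩
    calc algebraMap A B s • Φ x = Φ (ι z) := by rw [← hx, hΦS s hs]
      _ = algebraMap A B s • y := by rw [hΦ, hz]

theorem baseChange_completion_invert_p_bijective_and_finite_projective_general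
    {A B : Type*} [CommRing A] [CommRing B] [Algebra A B] (S : Submonoid A) (T : Submonoid B)
    (hT : Algebra.algebraMapSubmonoid B S = T) (I : Ideal B) [IsAdicComplete I B]
    (t : S) (ht : ∀ s ∈ S, ∀ a : A, s * a = 0 → t * a = 0)
    {M : Type*} [AddCommGroup M] [Module A M] [Module.Finite A M]
    [Module.Projective (Localization S) (LocalizedModule S M)]
    (Φ : (LocalizedModule S M ⊗[A] B) →+ LocalizedModule T (AdicCompletion I (B ⊗[A] M)))
    (hΦ : ∀ (m : M) (b : B), Φ (LocalizedModule.mkLinearMap S M m ⊗ₜ[A] b) =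
      LocalizedModule.mkLinearMap T (AdicCompletion I (B ⊗[A] M))
        (AdicCompletion.of I (B ⊗[A] M) (b ⊗ₜ[A] m)))
    (hΦS : ∀ s ∈ S, ∀ x, Φ (s • x) = algebraMap A B s • Φ x) :
    Function.Bijective Φ ∧
    Module.Finite (Localization T) (LocalizedModule T (AdicCompletion I (B ⊗[A] M))) ∧
    Module.Projective (Localization T) (LocalizedModule T (AdicCompletion I (B ⊗[A] M))) := by
  subst hT
  obtain ⟨n, s, retract⟩ := exists_isRetractUpTo_of_projective_localizedModule (N := M) S t ht
  have := isAdicComplete_of_finite_of_free I (B ⊗[A] (Fin n → A))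
  let T := Algebra.algebraMapSubmonoid B S
  let ι := AlgebraTensorModule.rTensor A B (LocalizedModule.mkLinearMap S M) ∘ₗ
    (TensorProduct.comm A B M).toLinearMap
  let j := LocalizedModule.mkLinearMap T (AdicCompletion I (B ⊗[A] M)) ∘ₗ
    AdicCompletion.of I (B ⊗[A] M)
  have retract_baseChange :
      IsRetractUpTo ((⟨_, s, s.2, rfl⟩ : T) : B) (B ⊗[A] M) (B ⊗[A] (Fin n → A)) :=
    retract.baseChange B
  have : IsLocalizedModule T j :=
    retract_baseChange.isLocalizedModule_comp_adicCompletion_of T I _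
  have hΦι (z : B ⊗[A] M) : Φ (ι z) = j z := by
    induction z with
    | zero => simp only [map_zero]
    | add x y hx hy => simp only [map_add, hx, hy]
    | tmul b m => exact hΦ m b
  exact ⟨bijective_of_isLocalizedModule_algebraMapSubmonoid S ι j Φ hΦι hΦS,
    Module.Finite.of_isLocalizedModule T j,
    retract_baseChange.projective_of_isLocalizedModule T j _⟩

theorem baseChange_completion_invert_p_bijective_and_finite_projective
    {A B : Type*} [CommRing A] [CommRing B] [Algebra A B] (p : ℕ) (hp : p.Prime)
    (hAcomp : IsAdicComplete (Ideal.span {(p : A)}) A)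
    (hBcomp : IsAdicComplete (Ideal.span {(p : B)}) B)
    (hAtf : (p : A) ∈ nonZeroDivisors A)
    {M : Type*} [AddCommGroup M] [Module A M]
    (hMfg : Module.Finite A M)
    (hMcomp : IsAdicComplete (Ideal.span {(p : A)}) M)
    (hMloc_fin : Module.Finite (Localization (Submonoid.powers (p : A)))
      (LocalizedModule (Submonoid.powers (p : A)) M))
    (hMloc_proj : Module.Projective (Localization (Submonoid.powers (p : A)))
      (LocalizedModule (Submonoid.powers (p : A)) M))
    (Φ : (LocalizedModule (Submonoid.powers (p : A)) M ⊗[A] B) →+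
      LocalizedModule (Submonoid.powers (p : B))
        (AdicCompletion (Ideal.span {(p : B)}) (B ⊗[A] M)))
    (hΦ : ∀ (m : M) (b : B),
      Φ (LocalizedModule.mkLinearMap (Submonoid.powers (p : A)) M m ⊗ₜ[A] b) =
        LocalizedModule.mkLinearMap (Submonoid.powers (p : B))
          (AdicCompletion (Ideal.span {(p : B)}) (B ⊗[A] M))
          (AdicCompletion.of (Ideal.span {(p : B)}) (B ⊗[A] M) (b ⊗ₜ[A] m))) :
    Function.Bijective Φ ∧
    Module.Finite (Localization (Submonoid.powers (p : B)))
      (LocalizedModule (Submonoid.powers (p : B))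
        (AdicCompletion (Ideal.span {(p : B)}) (B ⊗[A] M))) ∧
    Module.Projective (Localization (Submonoid.powers (p : B)))
      (LocalizedModule (Submonoid.powers (p : B))
        (AdicCompletion (Ideal.span {(p : B)}) (B ⊗[A] M))) := by
  refine baseChange_completion_invert_p_bijective_and_finite_projective_general _ _
    (by simp) _ 1 ?_ Φ hΦ ?_
  · rintro _ ⟨k, rfl⟩ a ha
    simpa using (mul_left_mem_nonZeroDivisors_eq_zero_iff (pow_mem hAtf k)).mp ha
  · rintro _ ⟨k, rfl⟩ x
    simpa using map_natCast_smul Φ A B (p ^ k) x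
end

section
/- Let p be a prime number and let A → B be a homomorphism of commutative rings which are both p-torsion-free and classically p-adically complete, and assume that the induced map A/p^nA → B/p^nB is faithfully flat for every n ≥ 1. Let M be a finitely generated, classically p-adically complete A-module, and let M_B denote the p-adic completion of M ⊗_A B. If M_B[1/p] is a finite projective B[1/p]-module, then M[1/p] is a finite projective A[1/p]-module. -/
open TensorProduct

/-- A ring homomorphism `f : R → S` is *faithfully flat* if it makes `S` a
faithfully flat `R`-module (the `R`-module structure on `S` being restriction
of scalars along `f`). -/
def RingHomFaithfullyFlat {R S : Type*} [CommRing R] [CommRing S] (f : R →+* S) : Prop :=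
  letI : Module R S := f.toModule
  Module.FaithfullyFlat R S

/-!
Present `M` as `P ⧸ K` with `P` finite free over `A`. The completed base change of `P → M` splits
after inverting `p`, and clearing denominators turns the splitting into an endomorphism `e` of
`B ⊗[A] P` that is `p ^ c` times a projection onto the closure of the base change of `K`. Flatness
enters only through purity: linear equations over `A` that are solvable over `B` modulo a power
of `p` are solvable over `A` modulo that power. Approximating `e` over `A` modulo high powers of `p`
gives first, by Nakayama, a finitely generated `K₀ ≤ K` containing `p ^ c • K`, and then a map
`P → K₀` which on `K₀` is `p ^ (2 * c)` modulo `p ^ (2 * c + 1)`, hence `p ^ (2 * c)` times an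
automorphism of `K₀`. Undoing the automorphism yields a map `P → K` equal to `p ^ (2 * c)` on `K`,
so `P → M` splits after inverting `p`.
-/

open Pointwise

universe u

section BaseChange

variable {A : Type*} (B : Type*) {P X : Type*} [CommRing A] [CommRing B] [Algebra A B]
  [AddCommGroup P] [Module A P] [AddCommGroup X] [Module A X]

lemma baseChange_submodule_map (f : P →ₗ[A] X) (U : Submodule A P) :
    (U.map f).baseChange B = (U.baseChange B).map (f.baseChange B) := by
  simp only [Submodule.baseChange_eq_span, LinearMap.map_span]
  congr 1
  ext z
  simp

lemma baseChange_submodule_sup (U V : Submodule A P) :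
    (U ⊔ V).baseChange B = U.baseChange B ⊔ V.baseChange B := by
  refine le_antisymm ?_ (sup_le (Submodule.baseChange_mono _ le_sup_left)
    (Submodule.baseChange_mono _ le_sup_right))
  rw [Submodule.baseChange_eq_span, Submodule.span_le]
  rintro _ ⟨x, hx, rfl⟩
  obtain ⟨u, hu, v, hv, rfl⟩ := Submodule.mem_sup.mp hx
  rw [map_add]
  exact Submodule.add_mem_sup (Submodule.tmul_mem_baseChange_of_mem _ hu)
    (Submodule.tmul_mem_baseChange_of_mem _ hv)

variable {B}

lemma mem_baseChange_pointwise_smul {a : A} {U : Submodule A P} {z : B ⊗[A] P} :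
    z ∈ (a • U).baseChange B ↔ ∃ u ∈ U.baseChange B, a • u = z := by
  have h : (a • U).baseChange B =
      (U.baseChange B).map ((LinearMap.lsmul A P a).baseChange B) :=
    baseChange_submodule_map B (LinearMap.lsmul A P a) U
  rw [h]
  have : ∀ u, (LinearMap.lsmul A P a).baseChange B u = a • u := fun u => by
    induction u with
    | zero => simp
    | add => simp_all
    | tmul => simp
  simp only [Submodule.mem_map, this]

lemma mem_baseChange_sup_smul_top {a : A} {U : Submodule A P} {z : B ⊗[A] P} :
    z ∈ (U ⊔ a • ⊤).baseChange B ↔ ∃ u ∈ U.baseChange B, ∃ r, z = u + a • r := by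
  simp only [baseChange_submodule_sup, Submodule.mem_sup, mem_baseChange_pointwise_smul,
    Submodule.baseChange_top, Submodule.mem_top, true_and, exists_exists_eq_and, @eq_comm _ z]

lemma exists_fg_le_mem_baseChange {U : Submodule A P} {z : B ⊗[A] P} (hz : z ∈ U.baseChange B) :
    ∃ V ≤ U, V.FG ∧ z ∈ V.baseChange B := by
  obtain ⟨w, rfl⟩ := hz
  obtain ⟨V, hV, hw⟩ := TensorProduct.exists_finite_submodule_right_of_setFinite {w}
    (Set.finite_singleton w)
  obtain ⟨w', rfl⟩ := hw rfl
  refine ⟨V.map U.subtype, Submodule.map_subtype_le U V,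
    (Module.Finite.iff_fg.mp hV).map _, ?_⟩
  rw [baseChange_submodule_map]
  exact ⟨_, ⟨w', rfl⟩, rfl⟩

lemma exists_fg_le_baseChange_sup {U V : Submodule A P} {D : Submodule B (B ⊗[A] P)} (hD : D.FG)
    (h : D ≤ (U ⊔ V).baseChange B) :
    ∃ W ≤ U, W.FG ∧ D ≤ (W ⊔ V).baseChange B := by
  induction D, hD using Submodule.fg_induction with
  | singleton z =>
    rw [Submodule.span_singleton_le_iff_mem, baseChange_submodule_sup] at h
    obtain ⟨u, hu, v, hv, rfl⟩ := Submodule.mem_sup.mp h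
    obtain ⟨W, hWU, hW, huW⟩ := exists_fg_le_mem_baseChange hu
    refine ⟨W, hWU, hW, ?_⟩
    rw [Submodule.span_singleton_le_iff_mem, baseChange_submodule_sup]
    exact Submodule.add_mem_sup huW hv
  | sup D₁ D₂ _ _ ih₁ ih₂ =>
    obtain ⟨W₁, hWU₁, hW₁, hD₁⟩ := ih₁ (le_sup_left.trans h)
    obtain ⟨W₂, hWU₂, hW₂, hD₂⟩ := ih₂ (le_sup_right.trans h)
    refine ⟨W₁ ⊔ W₂, sup_le hWU₁ hWU₂, hW₁.sup hW₂, sup_le ?_ ?_⟩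
    · exact hD₁.trans (Submodule.baseChange_mono _ (sup_le_sup_right le_sup_left _))
    · exact hD₂.trans (Submodule.baseChange_mono _ (sup_le_sup_right le_sup_right _))

lemma ker_baseChange {f : P →ₗ[A] X} (hf : Function.Surjective f) :
    LinearMap.ker (f.baseChange B) = (LinearMap.ker f).baseChange B := by
  ext z
  exact lTensor_exact B (LinearMap.exact_subtype_ker_map f) hf z

lemma baseChange_pi_ext {L : Type*} [Finite L] {z z' : B ⊗[A] (L → P)}
    (h : ∀ l, (LinearMap.proj l).baseChange B z = (LinearMap.proj l).baseChange B z') : z = z' := by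
  classical
  have := Fintype.ofFinite L
  apply (TensorProduct.piRight A B B (fun _ : L => P)).injective
  have proj_piRight (l : L) : LinearMap.proj l ∘ₗ TensorProduct.piRightHom A B B (fun _ : L => P) =
      (LinearMap.proj l : (L → P) →ₗ[A] P).baseChange B := by ext; rfl
  funext l
  have := h l
  rwa [← proj_piRight] at this

end BaseChange

section Purity

/-- `B` is *pure modulo powers of `a`* over `A` if every `A ⧸ (aⁿ) → B ⧸ (aⁿ)` is universally
injective, that is, `X → B ⊗[A] X` is injective for each `A`-module `X` killed by a power of `a`;
it is enough to test this on modules in the universe of `A`. -/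
def IsPureModPowers {A : Type u} [CommRing A] (a : A) (B : Type*) [CommRing B] [Algebra A B] :
    Prop :=
  ∀ (n : ℕ) (X : Type u) [AddCommGroup X] [Module A X], Module.IsTorsionBy A X (a ^ n) →
    Function.Injective (TensorProduct.mk A B X 1)

lemma mk_injective_of_faithfullyFlat_quotientMap {A B : Type*} [CommRing A] [CommRing B]
    [Algebra A B] {I : Ideal A} {J : Ideal B} (hIJ : I ≤ J.comap (algebraMap A B))
    (hff : RingHomFaithfullyFlat (Ideal.quotientMap J (algebraMap A B) hIJ))
    {X : Type*} [AddCommGroup X] [Module A X] (hX : Module.IsTorsionBySet A X I) :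
    Function.Injective (TensorProduct.mk A B X 1) := by
  let _ : Algebra (A ⧸ I) (B ⧸ J) := (Ideal.quotientMap J (algebraMap A B) hIJ).toAlgebra
  let _ : Module (A ⧸ I) X := hX.module
  have : IsScalarTower A (A ⧸ I) X := hX.isScalarTower
  have : IsScalarTower A (A ⧸ I) (B ⧸ J) := .of_algebraMap_eq fun _ => rfl
  have : Module.FaithfullyFlat (A ⧸ I) (B ⧸ J) := hff
  let toQuotient : B ⊗[A] X →ₗ[A] (B ⧸ J) ⊗[A ⧸ I] X :=
    (TensorProduct.mapOfCompatibleSMul (A ⧸ I) A A (B ⧸ J) X) ∘ₗ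
      (Ideal.Quotient.mkₐ A J).toLinearMap.rTensor X
  refine Function.Injective.of_comp (f := toQuotient) ?_
  exact Module.FaithfullyFlat.tensorProduct_mk_injective (A := A ⧸ I) (B := B ⧸ J) X

lemma IsPureModPowers.of_faithfullyFlat_quotientMap {A : Type u} {B : Type*} [CommRing A]
    [CommRing B] [Algebra A B] {a : A} {b : B}
    (hab : ∀ n : ℕ, Ideal.span {a ^ n} ≤ (Ideal.span {b ^ n}).comap (algebraMap A B))
    (hff : ∀ n : ℕ, 1 ≤ n → RingHomFaithfullyFlat
      (Ideal.quotientMap (Ideal.span {b ^ n}) (algebraMap A B) (hab n))) :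
    IsPureModPowers a B := by
  intro n X _ _ hX
  rcases Nat.eq_zero_or_pos n with rfl | hn
  · have : Subsingleton X := ⟨fun x y => by
      rw [← one_smul A x, ← one_smul A y, ← pow_zero a, hX, hX]⟩
    exact Function.injective_of_subsingleton _
  · exact mk_injective_of_faithfullyFlat_quotientMap (hab n) (hff n hn)
      ((Module.isTorsionBySet_span_singleton_iff _).mpr hX)

variable {A P : Type u} {B : Type*} [CommRing A] [CommRing B] [Algebra A B]
  [AddCommGroup P] [Module A P] {a : A}

lemma IsPureModPowers.mem_of_one_tmul_mem_baseChange (hB : IsPureModPowers a B) {n : ℕ}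
    {U : Submodule A P} (hU : a ^ n • ⊤ ≤ U) {x : P} (hx : 1 ⊗ₜ[A] x ∈ U.baseChange B) : x ∈ U := by
  have torsion : Module.IsTorsionBy A (P ⧸ U) (a ^ n) := by
    rintro ⟨y⟩
    exact (Submodule.Quotient.mk_eq_zero U).mpr
      (hU (Submodule.smul_mem_pointwise_smul y _ ⊤ trivial))
  rw [← U.ker_mkQ, ← ker_baseChange U.mkQ_surjective, LinearMap.mem_ker,
    LinearMap.baseChange_tmul] at hx
  exact (Submodule.Quotient.mk_eq_zero U).mp (hB n _ torsion (hx.trans (tmul_zero _ _).symm))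

lemma IsPureModPowers.isSMulRegular (hB : IsPureModPowers a B)
    (ha : IsSMulRegular (B ⊗[A] P) a) [hP : IsHausdorff (Ideal.span {a}) P] :
    IsSMulRegular P a := by
  refine .of_right_eq_zero_of_smul fun x hx => hP.haus x fun n => ?_
  rw [SModEq.zero, Ideal.span_singleton_pow, Submodule.ideal_span_singleton_smul]
  refine hB.mem_of_one_tmul_mem_baseChange le_rfl ?_
  have : (1 : B) ⊗ₜ[A] x = 0 := ha.right_eq_zero_of_smul (by rw [← tmul_smul, hx, tmul_zero])
  exact this ▸ zero_mem _

/-- Over a finite free module `P`, the linear system `φ (x l) = y l` in the matrix coefficients of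
`φ` is solvable modulo `a ^ m` once it is solvable after base change. -/
lemma IsPureModPowers.exists_linearMap_sub_mem {X : Type u} [AddCommGroup X] [Module A X]
    [Module.Free A P] [Module.Finite A P] (hB : IsPureModPowers a B) {m : ℕ} {U : Submodule A X}
    {e : B ⊗[A] P →ₗ[B] B ⊗[A] X} (he : LinearMap.range e ≤ (U ⊔ a ^ m • ⊤).baseChange B)
    {L : Type} [Finite L] {x : L → P} {y : L → X} (hxy : ∀ l, e (1 ⊗ₜ x l) = 1 ⊗ₜ y l) :
    ∃ φ : P →ₗ[A] U, ∀ l, y l - φ (x l) ∈ a ^ m • (⊤ : Submodule A X) := by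
  classical
  let b := Module.Free.chooseBasis A P
  let eval : (P →ₗ[A] U) →ₗ[A] (L → X) := LinearMap.pi fun l => U.subtype ∘ₗ LinearMap.applyₗ (x l)
  let T (i) : X →ₗ[A] (L → X) := LinearMap.pi fun l => b.coord i (x l) • LinearMap.id
  have y_eq : (1 : B) ⊗ₜ[A] y = ∑ i, (T i).baseChange B (e (1 ⊗ₜ b i)) := by
    refine baseChange_pi_ext fun l => ?_
    have proj_T (i) (z : B ⊗[A] X) : (LinearMap.proj l).baseChange B ((T i).baseChange B z) =
        b.coord i (x l) • z := by
      rw [← LinearMap.comp_apply, ← LinearMap.baseChange_comp, LinearMap.proj_pi,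
        LinearMap.baseChange_smul, LinearMap.baseChange_id, LinearMap.smul_apply,
        LinearMap.id_apply]
    rw [LinearMap.baseChange_tmul, map_sum, LinearMap.proj_apply, ← hxy]
    conv_lhs => rw [← b.sum_repr (x l), tmul_sum, map_sum]
    exact Finset.sum_congr rfl fun i _ => by
      rw [proj_T, tmul_smul, LinearMap.map_smul_of_tower, Module.Basis.coord_apply]
  have map_T (i) : (U ⊔ a ^ m • ⊤).map (T i) ≤ LinearMap.range eval ⊔ a ^ m • ⊤ := by
    rw [Submodule.map_sup]
    refine sup_le_sup ?_ ?_
    · rintro _ ⟨u, hu, rfl⟩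
      exact ⟨(b.coord i).smulRight ⟨u, hu⟩, rfl⟩
    · rw [Submodule.map_pointwise_smul]
      exact smul_mono_right _ le_top
  have y_mem : y ∈ LinearMap.range eval ⊔ a ^ m • ⊤ := by
    refine hB.mem_of_one_tmul_mem_baseChange le_sup_right (y_eq ▸ Submodule.sum_mem _ fun i _ => ?_)
    refine Submodule.baseChange_mono B (map_T i) ?_
    rw [baseChange_submodule_map]
    exact Submodule.mem_map_of_mem (he (LinearMap.mem_range_self e _))
  obtain ⟨_, ⟨φ, rfl⟩, _, ⟨w, -, rfl⟩, rfl⟩ := Submodule.mem_sup.mp y_mem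
  refine ⟨φ, fun l => ⟨w l, trivial, ?_⟩⟩
  simp [eval]

end Purity

section AdicCompleteness

variable {R : Type*} [CommRing R] {I : Ideal R}

lemma isPrecomplete_of_moduleFinite (I : Ideal R) [IsPrecomplete I R] (N : Type*) [AddCommGroup N]
    [Module R N] [Module.Finite R N] : IsPrecomplete I N := by
  refine AdicCompletion.of_surjective_iff.mp fun y => ?_
  obtain ⟨t, rfl⟩ := AdicCompletion.ofTensorProduct_surjective_of_finite I N y
  induction t with
  | zero => exact ⟨0, by simp⟩
  | add t t' ht ht' =>
    obtain ⟨x, hx⟩ := ht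
    obtain ⟨x', hx'⟩ := ht'
    exact ⟨x + x', by rw [map_add, map_add, hx, hx']⟩
  | tmul r x =>
    obtain ⟨r, rfl⟩ := AdicCompletion.of_surjective I R r
    refine ⟨r • x, ?_⟩
    rw [AdicCompletion.ofTensorProduct_tmul, map_smul]
    exact (algebraMap_smul (AdicCompletion I R) r (AdicCompletion.of I N x)).symm

instance isHausdorff_pi {ι : Type*} [hR : IsHausdorff I R] : IsHausdorff I (ι → R) where
  haus' x hx := by
    funext i
    refine hR.haus _ fun n => SModEq.zero.mpr ?_
    have := Submodule.mem_map_of_mem (f := LinearMap.proj (R := R) (φ := fun _ => R) i)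
      (SModEq.zero.mp (hx n))
    rw [Submodule.map_smul''] at this
    exact Submodule.smul_mono le_rfl le_top this

variable {N : Type*} [AddCommGroup N] [Module R N]

lemma isHausdorff_of_injective {N' : Type*} [AddCommGroup N'] [Module R N']
    [hN' : IsHausdorff I N'] {f : N →ₗ[R] N'} (hf : Function.Injective f) : IsHausdorff I N where
  haus' x hx := by
    refine hf ((hN'.haus _ fun n => SModEq.zero.mpr ?_).trans (map_zero f).symm)
    have := Submodule.mem_map_of_mem (f := f) (SModEq.zero.mp (hx n))
    rw [Submodule.map_smul''] at this
    exact Submodule.smul_mono le_rfl le_top this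

lemma le_of_le_sup_ideal_smul [IsPrecomplete I R] [IsHausdorff I N] {K U : Submodule R N}
    (hK : K.FG) (hKU : K ≤ U) (h : U ≤ K ⊔ I • U) : U ≤ K := by
  have := Module.Finite.iff_fg.mpr hK
  have := isPrecomplete_of_moduleFinite I K
  have : IsHausdorff I U := isHausdorff_of_injective U.subtype_injective
  suffices Function.Surjective (Submodule.inclusion hKU) from fun x hx => by
    obtain ⟨⟨_, hk⟩, ⟨⟩⟩ := this ⟨x, hx⟩
    exact hk
  refine surjective_of_mkQ_comp_surjective (I := I) ?_
  rintro ⟨x, hx⟩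
  obtain ⟨k, hk, z, hz, rfl⟩ := Submodule.mem_sup.mp (h hx)
  refine ⟨⟨k, hk⟩, (Submodule.Quotient.eq _).mpr ?_⟩
  have map_top : (I • ⊤ : Submodule R U).map U.subtype = I • U := by
    rw [Submodule.map_smul'', Submodule.map_subtype_top]
  refine U.subtype_injective.mem_set_image.mp ?_
  rw [← Submodule.map_coe, map_top]
  simpa using hz

lemma exists_linearEquiv_pow_smul_eq [Module.Finite R N] {a : R} (ha : IsSMulRegular N a)
    (ha_jac : a ∈ (⊥ : Ideal R).jacobson) {k : ℕ} {f : N →ₗ[R] N}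
    (hf : ∀ x, a ^ k • x - f x ∈ a ^ (k + 1) • (⊤ : Submodule R N)) :
    ∃ g : N ≃ₗ[R] N, ∀ x, f x = a ^ k • g x := by
  have hf' (x) : ∃ w, a ^ k • (x - a • w) = f x := by
    obtain ⟨w, -, hw⟩ := hf x
    refine ⟨w, ?_⟩
    rw [smul_sub, smul_smul, ← pow_succ, sub_eq_iff_eq_add, ← sub_eq_iff_eq_add']
    exact hw.symm
  let g : N →ₗ[R] N := f.codRestrictOfInjective (LinearMap.lsmul R N (a ^ k)) (ha.pow k)
    fun x => (hf' x).imp' _ fun _ => id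
  have hg (x) : a ^ k • g x = f x :=
    f.codRestrictOfInjective_comp_apply (LinearMap.lsmul R N (a ^ k)) (ha.pow k) _ x
  have g_surj : Function.Surjective g := by
    rw [← LinearMap.range_eq_top, ← top_le_iff]
    refine Submodule.le_of_le_smul_of_le_jacobson_bot (I := Ideal.span {a}) Module.Finite.fg_top
      ((Ideal.span_singleton_le_iff_mem _).mpr ha_jac) fun x _ => ?_
    obtain ⟨w, hw⟩ := hf' x
    have : x = g x + a • w := by rw [← ha.pow k (hw.trans (hg x).symm), sub_add_cancel]
    rw [this, Submodule.ideal_span_singleton_smul]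
    exact Submodule.add_mem_sup ⟨x, rfl⟩ (Submodule.smul_mem_pointwise_smul w a ⊤ trivial)
  exact ⟨.ofBijective g ⟨OrzechProperty.injective_of_surjective_endomorphism g g_surj, g_surj⟩,
    fun x => (hg x).symm⟩

end AdicCompleteness

section ScaledSplitting

variable {R F N : Type*} [CommRing R] (S : Submonoid R) [AddCommGroup F] [Module R F]
  [AddCommGroup N] [Module R N]

lemma projective_localizedModule_of_comp_eq_smul [Module.Projective R F] {π : F →ₗ[R] N}
    {σ : N →ₗ[R] F} {s : R} (hs : s ∈ S) (h : π ∘ₗ σ = s • LinearMap.id) :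
    Module.Projective (Localization S) (LocalizedModule S N) := by
  let u : Localization S := Localization.mk 1 ⟨s, hs⟩
  refine Module.Projective.of_split (u • LocalizedModule.map S σ) (LocalizedModule.map S π) ?_
  ext x
  induction x using LocalizedModule.induction_on with | h x t
  have : π (σ x) = s • x := LinearMap.congr_fun h x
  simp only [LinearMap.comp_apply, LinearMap.smul_apply, LocalizedModule.map_mk, this,
    LinearMap.id_apply, u, LocalizedModule.mk_smul_mk, one_smul]
  exact LocalizedModule.mk_cancel_common_left ⟨s, hs⟩ t x

lemma exists_comp_eq_smul_of_projective_localizedModule [Module.Finite R N] {π : F →ₗ[R] N}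
    (hπ : Function.Surjective π) (hF : ∀ s ∈ S, IsSMulRegular F s)
    [Module.Projective (Localization S) (LocalizedModule S N)] :
    ∃ s ∈ S, ∃ σ : N →ₗ[R] F, π ∘ₗ σ = s • LinearMap.id := by
  let ιF := LocalizedModule.mkLinearMap S F
  let ιN := LocalizedModule.mkLinearMap S N
  obtain ⟨τ, hτ⟩ := Module.projective_lifting_property (LocalizedModule.map S π) LinearMap.id
    (LocalizedModule.map_surjective S π hπ)
  let ρ : N →ₗ[R] LocalizedModule S F := τ.restrictScalars R ∘ₗ ιN
  have map_ρ (x : N) : LocalizedModule.map S π (ρ x) = ιN x := LinearMap.congr_fun hτ (ιN x)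
  have ιF_inj : Function.Injective ιF :=
    (IsLocalizedModule.injective_iff_isRegular S ιF).mpr fun s => hF s s.2
  obtain ⟨t, ht⟩ : ∃ t : S, ∀ x, t • ρ x ∈ LinearMap.range ιF := by
    classical
    obtain ⟨G, hG⟩ := Module.Finite.fg_top (R := R) (M := N)
    obtain ⟨t, ht⟩ := IsLocalizedModule.exist_integer_multiples_of_finset S ιF (G.image ρ)
    have : ⊤ ≤ (LinearMap.range ιF).comap (t • ρ) :=
      hG ▸ Submodule.span_le.mpr fun x hx => ht _ (Finset.mem_image_of_mem ρ hx)
    exact ⟨t, fun x => this trivial⟩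
  let σ := (t • ρ).codRestrictOfInjective ιF ιF_inj ht
  have hσ : ιN ∘ₗ π ∘ₗ σ = ιN ∘ₗ (t • LinearMap.id) := by
    have ιF_σ (x : N) : ιF (σ x) = t • ρ x :=
      (t • ρ).codRestrictOfInjective_comp_apply ιF ιF_inj ht x
    ext x
    calc ιN (π (σ x)) = LocalizedModule.map S π (ιF (σ x)) := (LocalizedModule.map_mk S π _ 1).symm
      _ = t • LocalizedModule.map S π (ρ x) := by rw [ιF_σ, LinearMap.map_smul_of_tower]
      _ = ιN (t • x) := by rw [map_ρ, LinearMap.map_smul_of_tower]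
  obtain ⟨t', ht'⟩ := Module.Finite.exists_smul_of_comp_eq_of_isLocalizedModule S ιN _ _ hσ
  refine ⟨t' * t, mul_mem t'.2 t.2, t' • σ, ?_⟩
  rw [LinearMap.comp_smul, ht', smul_smul]
  rfl

end ScaledSplitting

section ScaledProjection

variable {A B P : Type*} [CommRing A] [CommRing B] [Algebra A B] [AddCommGroup P] [Module A P]

/-- `e` is `a ^ c` times a projection onto the `a`-adic closure of `K.baseChange B`; the projection
itself need only exist after inverting `a`. It encodes that `K` becomes a direct summand of `P`
after completed base change to `B` and inversion of `a`. -/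
structure IsScaledProjection (a : A) (c : ℕ) (K : Submodule A P) (e : B ⊗[A] P →ₗ[B] B ⊗[A] P) :
    Prop where
  apply_of_mem : ∀ z ∈ K.baseChange B, e z = a ^ c • z
  apply_apply : ∀ z, e (e z) = a ^ c • e z
  range_le : ∀ m, LinearMap.range e ≤ (K ⊔ a ^ m • ⊤).baseChange B

variable {a : A} {c : ℕ} {K : Submodule A P} {e : B ⊗[A] P →ₗ[B] B ⊗[A] P}

lemma IsScaledProjection.apply_one_tmul (he : IsScaledProjection a c K e) {x : P} (hx : x ∈ K) :
    e (1 ⊗ₜ x) = 1 ⊗ₜ (a ^ c • x) := by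
  rw [he.apply_of_mem _ (Submodule.tmul_mem_baseChange_of_mem 1 hx), tmul_smul]

lemma IsScaledProjection.exists_fg_range_le (he : IsScaledProjection a c K e)
    (ha : IsSMulRegular (B ⊗[A] P) a) [Module.Finite A P] :
    ∃ K₀ ≤ K, K₀.FG ∧
      LinearMap.range e ≤ (K₀ ⊔ a ^ (c + 1) • K ⊔ a ^ (2 * c + 1) • ⊤).baseChange B := by
  obtain ⟨K₀, hK₀, hfg, hle⟩ :=
    exists_fg_le_baseChange_sup (Module.Finite.iff_fg.mp inferInstance) (he.range_le (2 * c + 1))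
  refine ⟨K₀, hK₀, hfg, ?_⟩
  rintro _ ⟨z, rfl⟩
  obtain ⟨u, hu, r, hz⟩ := mem_baseChange_sup_smul_top.mp (hle ⟨z, rfl⟩)
  -- The error term `r` is itself an eigenvector of `e`, so it can be approximated by `K` once more.
  have e_r : e r = a ^ c • r := by
    have e_u : e u = a ^ c • u := he.apply_of_mem u (Submodule.baseChange_mono B hK₀ hu)
    have := he.apply_apply z
    rw [hz, map_add, e_u, smul_add, add_right_inj, LinearMap.map_smul_of_tower, smul_comm] at this
    exact ha.pow (2 * c + 1) this
  obtain ⟨v, hv, w, hr⟩ := mem_baseChange_sup_smul_top.mp (he.range_le c ⟨r, rfl⟩)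
  refine mem_baseChange_sup_smul_top.mpr ⟨u + a ^ (c + 1) • v, ?_, w, ?_⟩
  · rw [baseChange_submodule_sup]
    exact Submodule.add_mem_sup hu (mem_baseChange_pointwise_smul.mpr ⟨v, hv, rfl⟩)
  · calc e z = u + a ^ (c + 1) • e r := by rw [hz, e_r, smul_smul, ← pow_add]; ring_nf
      _ = u + a ^ (c + 1) • v + a ^ (2 * c + 1) • w := by
        rw [hr, smul_add, smul_smul, ← pow_add, ← add_assoc]; ring_nf

end ScaledProjection

namespace IsScaledProjection

variable {A P : Type u} {B : Type*} [CommRing A] [CommRing B] [Algebra A B] [AddCommGroup P]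
  [Module A P] {a : A} {c : ℕ} {K : Submodule A P} {e : B ⊗[A] P →ₗ[B] B ⊗[A] P}

lemma pow_smul_mem (he : IsScaledProjection a c K e) (hB : IsPureModPowers a B)
    (ha : IsSMulRegular (B ⊗[A] P) a) [hK : IsHausdorff (Ideal.span {a}) (P ⧸ K)] {m : ℕ} {y : P}
    (hy : a ^ m • y ∈ K) : a ^ c • y ∈ K := by
  have e_y : e (1 ⊗ₜ y) = 1 ⊗ₜ (a ^ c • y) := by
    apply ha.pow m
    change a ^ m • e (1 ⊗ₜ y) = a ^ m • 1 ⊗ₜ (a ^ c • y)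
    rw [← LinearMap.map_smul_of_tower, ← tmul_smul, he.apply_one_tmul hy, smul_comm, tmul_smul]
  refine (Submodule.Quotient.mk_eq_zero K).mp (hK.haus _ fun m => SModEq.zero.mpr ?_)
  rw [Ideal.span_singleton_pow, Submodule.ideal_span_singleton_smul]
  have mem_sup : a ^ c • y ∈ K ⊔ a ^ m • ⊤ :=
    hB.mem_of_one_tmul_mem_baseChange le_sup_right
      (e_y ▸ he.range_le m (LinearMap.mem_range_self e _))
  obtain ⟨k, hk, _, ⟨w, -, rfl⟩, h⟩ := Submodule.mem_sup.mp mem_sup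
  refine ⟨K.mkQ w, trivial, ?_⟩
  rw [← h, Submodule.Quotient.mk_add, (Submodule.Quotient.mk_eq_zero K).mpr hk, zero_add]
  rfl

variable [Module.Finite A P]

lemma exists_fg_pow_smul_le (he : IsScaledProjection a c K e) (hB : IsPureModPowers a B)
    (ha : IsSMulRegular (B ⊗[A] P) a) [IsPrecomplete (Ideal.span {a}) A]
    [IsHausdorff (Ideal.span {a}) P] [IsHausdorff (Ideal.span {a}) (P ⧸ K)] :
    ∃ K₀ ≤ K, K₀.FG ∧ a ^ c • K ≤ K₀ := by
  obtain ⟨K₀, hK₀, hfg, hle⟩ := he.exists_fg_range_le ha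
  have smul_le : a ^ c • K ≤ K₀ ⊔ a ^ (c + 1) • K := by
    rintro _ ⟨x, hx, rfl⟩
    have e_x : e (1 ⊗ₜ x) = 1 ⊗ₜ (a ^ c • x) := he.apply_one_tmul hx
    have : a ^ c • x ∈ K₀ ⊔ a ^ (c + 1) • K ⊔ a ^ (2 * c + 1) • ⊤ :=
      hB.mem_of_one_tmul_mem_baseChange le_sup_right (e_x ▸ hle ⟨_, rfl⟩)
    obtain ⟨k, hk, _, ⟨w, -, rfl⟩, hkw⟩ := Submodule.mem_sup.mp this
    have k_mem : k ∈ K := sup_le hK₀ (K.smul_le_self_of_tower _) hk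
    have w_mem : a ^ c • w ∈ K := he.pow_smul_mem hB ha (m := 2 * c + 1) <|
      (Submodule.add_mem_iff_right K k_mem).mp (hkw ▸ K.smul_mem _ hx)
    change a ^ c • x ∈ _
    rw [← hkw]
    refine add_mem hk (le_sup_right (a := K₀) ⟨a ^ c • w, w_mem, ?_⟩)
    change a ^ (c + 1) • a ^ c • w = a ^ (2 * c + 1) • w
    rw [smul_smul, ← pow_add]
    ring_nf
  refine ⟨K₀, hK₀, hfg, le_sup_right.trans (le_of_le_sup_ideal_smul (I := Ideal.span {a})
    (U := K₀ ⊔ a ^ c • K) hfg le_sup_left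
      (sup_le le_sup_left (smul_le.trans (sup_le_sup_left ?_ _))))⟩
  rw [Submodule.ideal_span_singleton_smul, pow_succ', mul_smul]
  exact smul_mono_right a le_sup_right

lemma exists_linearMap_pow_smul_sub_mem [Module.Free A P] (he : IsScaledProjection a c K e)
    (hB : IsPureModPowers a B) (ha : IsSMulRegular (B ⊗[A] P) a)
    [IsHausdorff (Ideal.span {a}) (P ⧸ K)] {K₀ : Submodule A P} (hfg : K₀.FG) (hK₀ : K₀ ≤ K)
    (hle : a ^ c • K ≤ K₀) :
    ∃ f : P →ₗ[A] K₀, ∀ x : K₀,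
      a ^ (2 * c) • x - f x ∈ a ^ (2 * c + 1) • (⊤ : Submodule A K₀) := by
  obtain ⟨n, x, rfl⟩ := Submodule.fg_iff_exists_fin_generating_family.mp hfg
  have e_x (l) : e (1 ⊗ₜ x l) = 1 ⊗ₜ (a ^ c • x l) :=
    he.apply_one_tmul (hK₀ (Submodule.subset_span ⟨l, rfl⟩))
  -- Precision `3 * c + 1` is needed since `a ^ (3 * c + 1) • w ∈ K` only puts `a ^ c • w` in `K`.
  obtain ⟨φ, hφ⟩ := hB.exists_linearMap_sub_mem (he.range_le (3 * c + 1)) e_x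
  have hφ' : Submodule.span A (Set.range x) ≤
      (a ^ (3 * c + 1) • ⊤ : Submodule A P).comap (a ^ c • LinearMap.id - K.subtype ∘ₗ φ) :=
    Submodule.span_le.mpr (Set.range_subset_iff.mpr hφ)
  let f := (a ^ c • K.subtype ∘ₗ φ).codRestrict _ fun v => hle ⟨φ v, (φ v).2, rfl⟩
  refine ⟨f, fun x => ?_⟩
  obtain ⟨w, -, hw⟩ := hφ' x.2
  replace hw : a ^ (3 * c + 1) • w = a ^ c • (x : P) - φ x := hw
  have w_mem : a ^ c • w ∈ K := he.pow_smul_mem hB ha (m := 3 * c + 1) <|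
    hw ▸ sub_mem (K.smul_mem _ (hK₀ x.2)) (φ x).2
  refine ⟨⟨a ^ c • a ^ c • w, hle ⟨_, w_mem, rfl⟩⟩, trivial, Subtype.ext ?_⟩
  calc a ^ (2 * c + 1) • a ^ c • a ^ c • w = a ^ c • a ^ (3 * c + 1) • w := by
        simp only [smul_smul, ← pow_add]; ring_nf
    _ = a ^ (2 * c) • (x : P) - a ^ c • (φ x : P) := by
        rw [hw, smul_sub, smul_smul, ← pow_add, two_mul]

lemma exists_retraction [Module.Free A P] (he : IsScaledProjection a c K e)
    (hB : IsPureModPowers a B) (ha : IsSMulRegular (B ⊗[A] P) a) [IsAdicComplete (Ideal.span {a}) A]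
    [IsHausdorff (Ideal.span {a}) P] [IsHausdorff (Ideal.span {a}) (P ⧸ K)] :
    ∃ (k : ℕ) (r : P →ₗ[A] K), ∀ x : K, r x = a ^ k • x := by
  obtain ⟨K₀, hK₀, hfg, hle⟩ := he.exists_fg_pow_smul_le hB ha
  obtain ⟨f, hf⟩ := he.exists_linearMap_pow_smul_sub_mem hB ha hfg hK₀ hle
  have regular (N : Submodule A P) : IsSMulRegular N a :=
    (hB.isSMulRegular ha).submodule N a
  have jacobson : a ∈ (⊥ : Ideal A).jacobson :=
    IsAdicComplete.le_jacobson_bot (Ideal.span {a}) (Ideal.mem_span_singleton_self a)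
  have := Module.Finite.iff_fg.mpr hfg
  obtain ⟨g, hg⟩ := exists_linearEquiv_pow_smul_eq (f := f ∘ₗ K₀.subtype) (regular K₀) jacobson hf
  have g_symm (x : K₀) : g.symm (f x) = a ^ (2 * c) • x := by
    rw [LinearEquiv.symm_apply_eq, map_smul]
    exact hg x
  refine ⟨2 * c, Submodule.inclusion hK₀ ∘ₗ g.symm ∘ₗ f, fun x => (regular K).pow c ?_⟩
  let x₀ : K₀ := ⟨a ^ c • x, hle ⟨x, x.2, rfl⟩⟩
  calc a ^ c • Submodule.inclusion hK₀ (g.symm (f x))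
      = Submodule.inclusion hK₀ (g.symm (f x₀)) := by simp only [x₀, map_smul]
    _ = a ^ c • a ^ (2 * c) • x := by rw [g_symm, map_smul, smul_comm]; rfl

end IsScaledProjection

section Presentation

variable {A B M P : Type*} [CommRing A] [CommRing B] [Algebra A B]
  [AddCommGroup M] [Module A M] [AddCommGroup P] [Module A P]

lemma exists_comp_eq_smul_of_retraction {π : P →ₗ[A] M} (hπ : Function.Surjective π) {s : A}
    {r : P →ₗ[A] LinearMap.ker π} (hr : ∀ x : LinearMap.ker π, r x = s • x) :
    ∃ σ : M →ₗ[A] P, π ∘ₗ σ = s • LinearMap.id := by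
  let ψ : P →ₗ[A] P := s • LinearMap.id - (LinearMap.ker π).subtype ∘ₗ r
  have ker_le : LinearMap.ker π ≤ LinearMap.ker ψ := fun x hx => by
    have : r x = s • ⟨x, hx⟩ := hr ⟨x, hx⟩
    simp [ψ, this]
  refine ⟨(LinearMap.ker π).liftQ ψ ker_le ∘ₗ (π.quotKerEquivOfSurjective hπ).symm, ?_⟩
  ext m
  obtain ⟨x, rfl⟩ := hπ m
  have : (π.quotKerEquivOfSurjective hπ).symm (π x) = (LinearMap.ker π).mkQ x := by
    rw [LinearEquiv.symm_apply_eq]; rfl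
  simp [this, ψ]

variable {a : A}

lemma completed_baseChange_surjective [IsPrecomplete (Ideal.span {algebraMap A B a}) B]
    [Module.Finite A P] {π : P →ₗ[A] M} (hπ : Function.Surjective π) :
    Function.Surjective
      (AdicCompletion.of (Ideal.span {algebraMap A B a}) (B ⊗[A] M) ∘ₗ π.baseChange B) := by
  have := isPrecomplete_of_moduleFinite (Ideal.span {algebraMap A B a}) (B ⊗[A] P)
  intro y
  obtain ⟨z, rfl⟩ := AdicCompletion.map_surjective (Ideal.span {algebraMap A B a})
    (f := π.baseChange B) (LinearMap.lTensor_surjective B hπ) y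
  obtain ⟨w, rfl⟩ := AdicCompletion.of_surjective (Ideal.span {algebraMap A B a}) _ z
  exact ⟨w, by rw [AdicCompletion.map_of]; rfl⟩

lemma mem_baseChange_ker_sup_of_completed_baseChange_eq_zero {π : P →ₗ[A] M}
    (hπ : Function.Surjective π) {z : B ⊗[A] P}
    (hz : AdicCompletion.of (Ideal.span {algebraMap A B a}) (B ⊗[A] M) (π.baseChange B z) = 0)
    (m : ℕ) : z ∈ (LinearMap.ker π ⊔ a ^ m • ⊤).baseChange B := by
  have := congrArg (AdicCompletion.eval _ _ m) hz
  rw [AdicCompletion.eval_of, map_zero, Submodule.mkQ_apply, Submodule.Quotient.mk_eq_zero,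
    Ideal.span_singleton_pow, Submodule.ideal_span_singleton_smul] at this
  obtain ⟨y, -, hy⟩ := this
  obtain ⟨r, rfl⟩ := LinearMap.lTensor_surjective B hπ y
  replace hy : a ^ m • π.baseChange B r = π.baseChange B z := by
    rw [← hy, ← algebraMap_smul B, map_pow]; rfl
  refine mem_baseChange_sup_smul_top.mpr ⟨z - a ^ m • r, ?_, r, (sub_add_cancel _ _).symm⟩
  rw [← ker_baseChange hπ, LinearMap.mem_ker, map_sub, LinearMap.map_smul_of_tower, hy, sub_self]

lemma exists_isScaledProjection_ker [IsPrecomplete (Ideal.span {algebraMap A B a}) B]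
    [Module.Finite A P] (ha : IsSMulRegular (B ⊗[A] P) a) {π : P →ₗ[A] M}
    (hπ : Function.Surjective π)
    [Module.Projective (Localization (Submonoid.powers (algebraMap A B a)))
      (LocalizedModule (Submonoid.powers (algebraMap A B a))
        (AdicCompletion (Ideal.span {algebraMap A B a}) (B ⊗[A] M)))] :
    ∃ (c : ℕ) (e : B ⊗[A] P →ₗ[B] B ⊗[A] P), IsScaledProjection a c (LinearMap.ker π) e := by
  let b := algebraMap A B a
  let πB : B ⊗[A] P →ₗ[B] AdicCompletion (Ideal.span {b}) (B ⊗[A] M) :=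
    AdicCompletion.of (Ideal.span {b}) _ ∘ₗ π.baseChange B
  have pow_smul (c : ℕ) (z : B ⊗[A] P) : b ^ c • z = a ^ c • z := by
    rw [← algebraMap_smul B (a ^ c) z, map_pow]
  have πB_surj : Function.Surjective πB := completed_baseChange_surjective hπ
  have := Module.Finite.of_surjective πB πB_surj
  obtain ⟨_, ⟨c, rfl⟩, σ, hσ⟩ := exists_comp_eq_smul_of_projective_localizedModule
    (Submonoid.powers b) πB_surj (by
      rintro _ ⟨c, rfl⟩ z z' h
      exact ha.pow c (by simpa only [pow_smul] using h))
  let e : B ⊗[A] P →ₗ[B] B ⊗[A] P := b ^ c • LinearMap.id - σ ∘ₗ πB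
  have e_of_ker (z) (hz : πB z = 0) : e z = a ^ c • z := by
    simp [e, hz, pow_smul]
  have πB_e (z) : πB (e z) = 0 := by
    have : πB (σ (πB z)) = b ^ c • πB z := LinearMap.congr_fun hσ (πB z)
    simp only [e, LinearMap.sub_apply, LinearMap.smul_apply, LinearMap.id_apply,
      LinearMap.comp_apply σ, map_sub, map_smul, this, sub_self]
  refine ⟨c, e, fun z hz => e_of_ker z ?_, fun z => e_of_ker _ (πB_e z), ?_⟩
  · rw [← ker_baseChange hπ, LinearMap.mem_ker] at hz
    rw [LinearMap.comp_apply, hz, map_zero]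
  · rintro m _ ⟨z, rfl⟩
    exact mem_baseChange_ker_sup_of_completed_baseChange_eq_zero hπ (πB_e z) m

end Presentation

theorem finite_projective_invert_p_descends_along_complete_faithfully_flat_general
    {A : Type u} {B M : Type*} [CommRing A] [CommRing B] [Algebra A B] [AddCommGroup M]
    [Module A M] {a : A} {b : B} (hab : algebraMap A B a = b) (hb : b ∈ nonZeroDivisors B)
    [IsAdicComplete (Ideal.span {a}) A] [IsPrecomplete (Ideal.span {b}) B]
    (hB : IsPureModPowers a B) [Module.Finite A M] [IsHausdorff (Ideal.span {a}) M]
    [Module.Projective (Localization (Submonoid.powers b))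
      (LocalizedModule (Submonoid.powers b) (AdicCompletion (Ideal.span {b}) (B ⊗[A] M)))] :
    Module.Finite (Localization (Submonoid.powers a)) (LocalizedModule (Submonoid.powers a) M) ∧
      Module.Projective (Localization (Submonoid.powers a))
        (LocalizedModule (Submonoid.powers a) M) := by
  subst hab
  obtain ⟨n, π, hπ⟩ := Module.Finite.exists_fin' A M
  have regular : IsSMulRegular (B ⊗[A] (Fin n → A)) a := fun z z' h =>
    Module.Flat.isSMulRegular_of_nonZeroDivisors hb (by simpa only [algebraMap_smul] using h)
  have : IsHausdorff (Ideal.span {a}) ((Fin n → A) ⧸ LinearMap.ker π) :=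
    isHausdorff_of_injective (f := (π.quotKerEquivOfSurjective hπ).toLinearMap)
      (LinearEquiv.injective _)
  obtain ⟨c, e, he⟩ := exists_isScaledProjection_ker regular hπ
  obtain ⟨k, r, hr⟩ := he.exists_retraction hB regular
  obtain ⟨σ, hσ⟩ := exists_comp_eq_smul_of_retraction hπ hr
  exact ⟨inferInstance, projective_localizedModule_of_comp_eq_smul _ ⟨k, rfl⟩ hσ⟩

/-!
Let p be a prime and A → B a homomorphism of commutative rings, both
p-torsion-free and classically p-adically complete, such that the induced map
A/pⁿA → B/pⁿB is faithfully flat for every n ≥ 1.  Let M be a finitely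
generated, classically p-adically complete A-module, and let M_B denote the
p-adic completion of M ⊗_A B (realized as
`AdicCompletion (span {p}) (B ⊗[A] M)`).  If M_B[1/p] is a finite projective
B[1/p]-module, then M[1/p] is a finite projective A[1/p]-module.
-/

theorem finite_projective_invert_p_descends_along_complete_faithfully_flat
    {A B : Type*} [CommRing A] [CommRing B] [Algebra A B] (p : ℕ) (hp : p.Prime)
    (hAtf : (p : A) ∈ nonZeroDivisors A) (hBtf : (p : B) ∈ nonZeroDivisors B)
    (hAcomp : IsAdicComplete (Ideal.span {(p : A)}) A)
    (hBcomp : IsAdicComplete (Ideal.span {(p : B)}) B)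
    (hff : ∀ n : ℕ, 1 ≤ n → RingHomFaithfullyFlat
      (Ideal.quotientMap (Ideal.span {(p : B) ^ n}) (algebraMap A B)
        (show Ideal.span {(p : A) ^ n} ≤
            (Ideal.span {(p : B) ^ n}).comap (algebraMap A B) by
          rw [Ideal.span_le, Set.singleton_subset_iff, SetLike.mem_coe, Ideal.mem_comap,
            map_pow, map_natCast]
          exact Ideal.mem_span_singleton_self _)))
    {M : Type*} [AddCommGroup M] [Module A M]
    (hMfg : Module.Finite A M)
    (hMcomp : IsAdicComplete (Ideal.span {(p : A)}) M)
    (hBfin : Module.Finite (Localization (Submonoid.powers (p : B)))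
      (LocalizedModule (Submonoid.powers (p : B))
        (AdicCompletion (Ideal.span {(p : B)}) (B ⊗[A] M))))
    (hBproj : Module.Projective (Localization (Submonoid.powers (p : B)))
      (LocalizedModule (Submonoid.powers (p : B))
        (AdicCompletion (Ideal.span {(p : B)}) (B ⊗[A] M)))) :
    Module.Finite (Localization (Submonoid.powers (p : A)))
      (LocalizedModule (Submonoid.powers (p : A)) M) ∧
    Module.Projective (Localization (Submonoid.powers (p : A)))
      (LocalizedModule (Submonoid.powers (p : A)) M) := by
  have hab (n : ℕ) : Ideal.span {(p : A) ^ n} ≤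
      (Ideal.span {(p : B) ^ n}).comap (algebraMap A B) := by
    rw [Ideal.span_singleton_le_iff_mem, Ideal.mem_comap, map_pow, map_natCast]
    exact Ideal.mem_span_singleton_self _
  exact finite_projective_invert_p_descends_along_complete_faithfully_flat_general
    (map_natCast _ p) hBtf (.of_faithfullyFlat_quotientMap hab hff)
end
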